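/- Under the hypotheses of the β-recurrence result on a block graph (edge regular-variation assumption and chain identities along shortest paths), let i, j be distinct vertices with shortest path {i = v_0, v_1, …, v_m = j}, m ≥ 2, and suppose every pathwise coefficient vanishes: max_{k=1,…,m} α_{v_k|v_{k−1}} = 0. Then β_{j|i} = ∏_{k=1}^{m} β_{v_k|v_{k−1}}; that is, x ↦ g_{{i,j}}(1, x) − 1 is regularly varying at 0+ with index 1/(1 − ∏_k β_{v_k|v_{k−1}}). -/

import Mathlib

/-!
Along a shortest path every pair `(i, v_{t+1})` has gauge equal to an infimal convolution: the chain
identity, minimised over the middle coordinate `s`, gives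
`H(w) = inf_{s ≥ 0} (h(s) + φ(s, w))`, where `h(s) = g_{i,v_t}(1, s) - 1`,
`H(w) = g_{i,v_{t+1}}(1, w) - 1` and `φ(s, w) = g_{v_t,v_{t+1}}(s, w) - s = s k(w / s)`, with
`k(y) = g_{v_t,v_{t+1}}(1, y) - 1`. Suppose `h` and `k` are regularly varying with indices
`a = 1/(1-β)` and `b = 1/(1-β')`, and put `q = 1/(1-ββ')`. Swapping `l` with `1/l` shows that regular
variation of `H` with index `q` follows from the one-sided estimate
`H(l w) ≤ (1+ε) l^q H(w)` for small `w` (`rv0_of_upper`), which is obtained by comparing the objective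
at `s` with the one at a rescaled competitor (`conv_upper`):

* large `s` costs at least a positive constant, whereas `H(w) = O(w)`;
* when both `s` and `w / s` are small, the competitor `l^p s` with `p = q / a` multiplies both
  `h(s)` and `φ(s, w)` by approximately `l^q`;
* when `w / s` is not small, `φ(s, w)` has order at least `w`. If `β, β' > 0`, this is too expensive
  because then `H(w) = o(w)`; if `β' = 0 < β`, the competitor `l s` works because `h(s) = o(s)`;
* if `β = 0`, then `q = p = 1`, and the competitor `l s` works for every small `s` since `φ` is
  homogeneous.

Only the definition of regular variation at the fixed scales `l`, `l^p`, `l^(1-p)` and `1/2` enters,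
so no uniform convergence theorem is needed. The result follows by induction on the path length.
-/

open Filter Topology

/-- Regular variation at `0⁺` with index `σ`. -/
def RV0 (F : ℝ → ℝ) (σ : ℝ) : Prop :=
  ∀ l : ℝ, 0 < l →
    Filter.Tendsto (fun x => F (l * x) / F x) (nhdsWithin 0 (Set.Ioi 0)) (nhds (l ^ σ))

/-! ### Slices and regular variation at a fixed scale -/

/-- The properties of `s ↦ g(1, s) - 1` that are propagated along the path: vanishing at `0`, local
boundedness, a positive lower bound away from `0`, and regular variation at `0⁺` with index `a`.
Continuity is not required. -/
structure Slice (h : ℝ → ℝ) (a : ℝ) : Prop where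
  zero : h 0 = 0
  bdd : ∃ B, ∀ s, 0 ≤ s → s ≤ 1 → h s ≤ B
  low : ∀ δ > 0, ∃ c > 0, ∀ s, δ ≤ s → c ≤ h s
  rv : RV0 h a

lemma Slice.pos {h : ℝ → ℝ} {a : ℝ} (P : Slice h a) {s : ℝ} (hs : 0 < s) : 0 < h s := by
  obtain ⟨c, hc, H⟩ := P.low s hs
  exact lt_of_lt_of_le hc (H s le_rfl)

lemma Slice.nonneg {h : ℝ → ℝ} {a : ℝ} (P : Slice h a) {s : ℝ} (hs : 0 ≤ s) : 0 ≤ h s := by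
  rcases hs.eq_or_lt with rfl | hs
  · rw [P.zero]
  · exact (P.pos hs).le

lemma Slice.upper {h : ℝ → ℝ} {a : ℝ} (P : Slice h a) {l ρ : ℝ} (hl : 0 < l) (hρ : l ^ a < ρ) :
    ∃ δ > 0, ∀ s, 0 ≤ s → s < δ → h (l * s) ≤ ρ * h s := by
  have h1 := (P.rv l hl).eventually (gt_mem_nhds hρ)
  obtain ⟨δ, hδ, H⟩ := (nhdsGT_basis (0:ℝ)).eventually_iff.1 h1
  refine ⟨δ, hδ, fun s hs hsδ => ?_⟩
  rcases hs.eq_or_lt with rfl | hs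
  · simp [P.zero]
  · have := H ⟨hs, hsδ⟩
    rw [div_lt_iff₀ (P.pos hs)] at this
    exact this.le

/-- A slice of index `a > 1` is `o(s)` at `0⁺`: halving the argument shrinks `h` by a factor
`ρ < 1/2`, so `h(s) / s` decays geometrically along dyadic scales. -/
lemma Slice.littleo {h : ℝ → ℝ} {a : ℝ} (P : Slice h a) (ha : 1 < a) {η : ℝ} (hη : 0 < η) :
    ∃ δ > 0, ∀ s, 0 ≤ s → s ≤ δ → h s ≤ η * s := by
  have hr : (1/2:ℝ) ^ a < 1/2 := by
    have := Real.rpow_lt_rpow_of_exponent_gt (x := (1/2:ℝ)) (by norm_num) (by norm_num) ha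
    simpa using this
  obtain ⟨ρ, hρ1, hρ2⟩ := exists_between hr
  have hρ0 : 0 < ρ := lt_trans (by positivity) hρ1
  obtain ⟨δ, hδ, H⟩ := P.upper (by norm_num : (0:ℝ) < 1/2) hρ1
  obtain ⟨B, hB⟩ := P.bdd
  have hB0 : 0 ≤ B := by simpa [P.zero] using hB 0 le_rfl zero_le_one
  obtain ⟨d, hd0, hd⟩ : ∃ d, 0 < d ∧ d < min δ 1 := exists_between (by positivity)
  have hdδ : d < δ := lt_of_lt_of_le hd (min_le_left _ _)
  have hd1 : d < 1 := lt_of_lt_of_le hd (min_le_right _ _)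
  have key : ∀ n : ℕ, ∀ s, 0 ≤ s → s ≤ d → h ((1/2)^n * s) ≤ ρ^n * B := by
    intro n
    induction n with
    | zero => intro s hs hsd; simpa using hB s hs (by linarith)
    | succ n ih =>
      intro s hs hsd
      have h1 : (1/2:ℝ)^n * s ≤ s :=
        mul_le_of_le_one_left hs (pow_le_one₀ (by norm_num) (by norm_num))
      have h2 := H ((1/2)^n * s) (by positivity) (by linarith)
      calc h ((1/2)^(n+1) * s) = h (1/2 * ((1/2)^n * s)) := by ring_nf
        _ ≤ ρ * h ((1/2)^n * s) := h2
        _ ≤ ρ * (ρ^n * B) := by gcongr; exact ih s hs hsd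
        _ = _ := by ring
  have hlim : Tendsto (fun n : ℕ => (2*ρ)^n * B) atTop (𝓝 0) := by
    simpa using (tendsto_pow_atTop_nhds_zero_of_lt_one (r := 2*ρ) (by positivity)
      (by linarith)).mul_const B
  obtain ⟨n0, hn0⟩ := eventually_atTop.1
    (hlim.eventually (gt_mem_nhds (show 0 < η * (d/2) by positivity)))
  refine ⟨d * (1/2)^n0, by positivity, fun s hs hsd => ?_⟩
  rcases hs.eq_or_lt with rfl | hs
  · simp [P.zero]
  have hx1 : s / d ≤ (1/2)^n0 := by rw [div_le_iff₀ hd0]; linarith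
  obtain ⟨n, hn1, hn2⟩ := exists_nat_pow_near_of_lt_one (x := s/d) (y := (1/2:ℝ)) (by positivity)
    (hx1.trans (pow_le_one₀ (by norm_num) (by norm_num))) (by norm_num) (by norm_num)
  have hnn : n0 ≤ n := by
    by_contra hcon
    have : (1/2:ℝ)^n0 ≤ (1/2)^(n+1) :=
      pow_le_pow_of_le_one (by norm_num) (by norm_num) (by omega)
    linarith
  have hpp : (1/2:ℝ)^n * 2^n = 1 := by rw [← mul_pow]; norm_num
  have hs0 : 2^n * s ≤ d := by
    rw [div_le_iff₀ hd0] at hn2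
    calc 2^n * s ≤ 2^n * ((1/2)^n * d) := by gcongr
      _ = ((1/2:ℝ)^n * 2^n) * d := by ring
      _ = d := by rw [hpp, one_mul]
  have hs1 : d / 2 ≤ 2^n * s := by
    rw [lt_div_iff₀ hd0] at hn1
    calc d / 2 = ((1/2:ℝ)^n * 2^n) * (d/2) := by rw [hpp, one_mul]
      _ = 2^n * ((1/2)^(n+1) * d) := by ring
      _ ≤ 2^n * s := by gcongr
  have h3 := key n (2^n * s) (by positivity) hs0
  rw [← mul_assoc, hpp, one_mul] at h3
  calc h s ≤ ρ^n * B := h3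
    _ = (1/2)^n * ((2*ρ)^n * B) := by
      rw [mul_pow, ← mul_assoc, ← mul_assoc, hpp, one_mul]
    _ ≤ (1/2)^n * (η * (2^n * s)) := by
      exact mul_le_mul_of_nonneg_left ((hn0 n hnn).le.trans (by gcongr)) (by positivity)
    _ = ((1/2:ℝ)^n * 2^n) * (η * s) := by ring
    _ = η * s := by rw [hpp, one_mul]

/-- A one-sided estimate at every scale suffices for regular variation, since the reverse bound at
scale `l` is the upper bound at scale `1/l`. -/
lemma rv0_of_upper {H : ℝ → ℝ} {q : ℝ} (hpos : ∀ w, 0 < w → 0 < H w)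
    (hup : ∀ l > 0, ∀ ε > 0, ∃ δ > 0, ∀ w, 0 < w → w < δ → H (l * w) ≤ (1 + ε) * l ^ q * H w) :
    RV0 H q := by
  intro l hl
  have hlq : 0 < l ^ q := Real.rpow_pos_of_pos hl q
  rw [tendsto_order]
  constructor
  · intro A hA
    obtain ⟨A', hA1, hA2⟩ := exists_between (max_lt hA hlq)
    have hA'0 : 0 < A' := lt_of_le_of_lt (le_max_right _ _) hA1
    have hAA' : A < A' := lt_of_le_of_lt (le_max_left _ _) hA1
    -- with this `ε`, the lower bound `l ^ q / (1 + ε)` equals `A'`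
    obtain ⟨δ, hδ, hw⟩ := hup l⁻¹ (inv_pos.2 hl) (l ^ q / A' - 1)
      (by rw [gt_iff_lt, sub_pos, one_lt_div hA'0]; exact hA2)
    refine (nhdsGT_basis (0:ℝ)).eventually_iff.2 ⟨δ / l, by positivity, fun w hw' => ?_⟩
    have hw0 : 0 < w := hw'.1
    have h1 := hw (l * w) (by positivity) (by have := hw'.2; rw [lt_div_iff₀ hl] at this; linarith)
    rw [inv_mul_cancel_left₀ hl.ne', Real.inv_rpow hl.le] at h1
    have h2 : (1 + (l ^ q / A' - 1)) * (l ^ q)⁻¹ * H (l * w) = H (l * w) / A' := by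
      field_simp
      ring
    rw [h2, le_div_iff₀ hA'0] at h1
    refine lt_of_lt_of_le hAA' ?_
    rw [le_div_iff₀ (hpos w hw0)]
    linarith
  · intro A hA
    obtain ⟨A', hA1, hA2⟩ := exists_between hA
    obtain ⟨δ, hδ, hw⟩ := hup l hl (A' / l ^ q - 1)
      (by rw [gt_iff_lt, sub_pos, one_lt_div hlq]; exact hA1)
    refine (nhdsGT_basis (0:ℝ)).eventually_iff.2 ⟨δ, hδ, fun w hw' => ?_⟩
    have h1 := hw w hw'.1 hw'.2
    have h2 : (1 + (A' / l ^ q - 1)) * l ^ q = A' := by field_simp; ring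
    rw [h2] at h1
    refine lt_of_le_of_lt ?_ hA2
    rw [div_le_iff₀ (hpos w hw'.1)]
    exact h1

/-! ### Edge gauges -/

/-- The scaling properties of an edge gauge `e`, with slice `e 1 y - 1` of index `b` (so that the
edge has `α = 0`). -/
structure EdgeGauge (e : ℝ → ℝ → ℝ) (b : ℝ) : Prop where
  max_le : ∀ u y, 0 ≤ u → 0 ≤ y → max u y ≤ e u y
  hom : ∀ t u y, 0 ≤ t → 0 ≤ u → 0 ≤ y → e (t * u) (t * y) = t * e u y
  slice : Slice (fun y => e 1 y - 1) b

lemma EdgeGauge.nonneg {e : ℝ → ℝ → ℝ} {b : ℝ} (E : EdgeGauge e b) {s w : ℝ} (hs : 0 ≤ s)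
    (hw : 0 ≤ w) : 0 ≤ e s w - s := by
  have := (le_max_left s w).trans (E.max_le s w hs hw)
  linarith

lemma EdgeGauge.eq_slice {e : ℝ → ℝ → ℝ} {b : ℝ} (E : EdgeGauge e b) {s w : ℝ} (hs : 0 < s)
    (hw : 0 ≤ w) : e s w - s = s * (e 1 (w / s) - 1) := by
  have := E.hom s 1 (w / s) hs.le zero_le_one (by positivity)
  rw [mul_one, mul_div_cancel₀ _ hs.ne'] at this
  rw [this]; ring

lemma EdgeGauge.zero_left {e : ℝ → ℝ → ℝ} {b : ℝ} (E : EdgeGauge e b) {w : ℝ}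
    (hw : 0 ≤ w) : e 0 w = w * e 0 1 := by
  simpa using E.hom w 0 1 hw le_rfl zero_le_one

/-- Where `w / s` is bounded away from `0`, the edge cost `e s w - s` has order at least `w`. -/
lemma EdgeGauge.low {e : ℝ → ℝ → ℝ} {b : ℝ} (E : EdgeGauge e b) {δ : ℝ} (hδ : 0 < δ) :
    ∃ c > 0, ∀ s w, 0 ≤ s → 0 ≤ w → δ * s ≤ w → c * w ≤ e s w - s := by
  obtain ⟨c, hc, H⟩ := E.slice.low δ hδ
  refine ⟨min (c/2) (1/2), by positivity, fun s w hs hw hsw => ?_⟩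
  have hmax := (le_max_right s w).trans (E.max_le s w hs hw)
  have h1 : min (c/2) (1/2) * w ≤ c/2 * w := by gcongr; exact min_le_left _ _
  have h2 : min (c/2) (1/2) * w ≤ 1/2 * w := by gcongr; exact min_le_right _ _
  rcases le_total (2 * s) w with h | h
  · linarith
  · rcases hs.eq_or_lt with rfl | hs
    · linarith
    rw [E.eq_slice hs hw]
    have h3 := H (w / s) (by rw [le_div_iff₀ hs]; exact hsw)
    have h4 : s * c ≤ s * (e 1 (w / s) - 1) := by gcongr
    nlinarith

/-! ### Infimal convolution of a slice with an edge gauge -/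

/-- The one-sided estimate for the infimal convolution `H(w) = inf_s (h(s) + e(s, w) - s)`. -/
lemma conv_upper {h H : ℝ → ℝ} {e : ℝ → ℝ → ℝ} {β β' : ℝ} (hβ : β ∈ Set.Ico (0:ℝ) 1)
    (hβ' : β' ∈ Set.Ico (0:ℝ) 1) (P : Slice h (1/(1-β))) (E : EdgeGauge e (1/(1-β')))
    (hH : ∀ w, 0 ≤ w → IsGLB {r | ∃ s, 0 ≤ s ∧ r = h s + (e s w - s)} (H w))
    {l : ℝ} (hl : 0 < l) {ε : ℝ} (hε : 0 < ε) :
    ∃ δ > 0, ∀ w, 0 < w → w < δ → H (l * w) ≤ (1 + ε) * l ^ (1/(1-β*β')) * H w := by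
  obtain ⟨hβ0, hβ1⟩ := hβ
  obtain ⟨hβ'0, hβ'1⟩ := hβ'
  have hββ : β * β' < 1 := by nlinarith
  set q := 1/(1-β*β') with hq
  have hlq : 0 < l ^ q := Real.rpow_pos_of_pos hl q
  have hle : ∀ w s, 0 ≤ w → 0 ≤ s → H w ≤ h s + (e s w - s) :=
    fun w s hw hs => (hH w hw).1 ⟨s, hs, rfl⟩
  -- a bound on the objective, uniform in `s`, passes to the infimum
  suffices hs : ∃ δ > 0, ∀ w, 0 < w → w < δ → ∀ s, 0 ≤ s →
      H (l * w) ≤ (1 + ε) * l ^ q * (h s + (e s w - s)) by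
    obtain ⟨δ, hδ, hs⟩ := hs
    refine ⟨δ, hδ, fun w hw hwδ => ?_⟩
    have hK : 0 < (1 + ε) * l ^ q := by positivity
    rw [← div_le_iff₀' hK]
    refine (hH w hw.le).2 ?_
    rintro r ⟨s, hs0, rfl⟩
    rw [div_le_iff₀' hK]
    exact hs w hw hwδ s hs0
  have hlin : ∀ w, 0 ≤ w → H w ≤ w * e 0 1 := by
    intro w hw
    have := hle w 0 hw le_rfl
    rw [P.zero, E.zero_left hw] at this
    linarith
  have he01 : 1 ≤ e 0 1 := (le_max_right 0 1).trans (E.max_le 0 1 le_rfl zero_le_one)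
  have hfar : ∀ d > 0, ∃ δ > 0, ∀ w, 0 < w → w < δ → ∀ s, d ≤ s →
      H (l * w) ≤ (1 + ε) * l ^ q * (h s + (e s w - s)) := by
    intro d hd
    obtain ⟨c, hc, hlow⟩ := P.low d hd
    refine ⟨l ^ q * c / (l * e 0 1), by positivity, fun w hw hwδ s hs => ?_⟩
    rw [lt_div_iff₀ (by positivity)] at hwδ
    have h1 := hlin (l * w) (by positivity)
    have h2 := hlow s hs
    have h3 := E.nonneg (hd.le.trans hs) hw.le
    calc H (l * w) ≤ l ^ q * c := by linarith
      _ ≤ l ^ q * (h s + (e s w - s)) := by gcongr; linarith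
      _ ≤ (1 + ε) * l ^ q * (h s + (e s w - s)) := by
        rw [mul_assoc]
        refine le_mul_of_one_le_left ?_ (by linarith)
        have : 0 ≤ h s + (e s w - s) := by linarith
        positivity
  have hscale : ∀ w s, 0 < w → 0 ≤ s → H (l * w) ≤ h (l * s) + l * (e s w - s) := by
    intro w s hw hs
    have := hle (l * w) (l * s) (by positivity) (by positivity)
    rw [E.hom l s w hl.le hs hw.le] at this
    linarith
  rcases hβ0.eq_or_lt with rfl | hβ0
  · have hq1 : q = 1 := by rw [hq]; norm_num
    obtain ⟨d, hd, hup⟩ := P.upper (l := l) (ρ := (1 + ε) * l) hl (by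
      norm_num; nlinarith)
    obtain ⟨δ, hδ, hfar⟩ := hfar d hd
    refine ⟨δ, hδ, fun w hw hwδ s hs => ?_⟩
    rcases le_or_gt d s with hds | hds
    · exact hfar w hw hwδ s hds
    have h1 := hscale w s hw hs
    have h2 := hup s hs hds
    have h3 := E.nonneg hs hw.le
    rw [hq1, Real.rpow_one]
    have : 0 ≤ ε * l * (e s w - s) := by positivity
    nlinarith
  have ha : 1 < 1/(1-β) := by rw [lt_div_iff₀] <;> linarith
  -- the scaling exponent of the competitor
  set p := (1-β)/(1-β*β') with hp
  have hpa : p * (1/(1-β)) = q := by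
    have h1 : 1 - β ≠ 0 := by linarith
    have h2 : 1 - β*β' ≠ 0 := by linarith
    rw [hp, hq]; field_simp
  have hpb : p + (1-p) * (1/(1-β')) = q := by
    have h1 : 1 - β' ≠ 0 := by linarith
    have h2 : 1 - β*β' ≠ 0 := by linarith
    rw [hp, hq]; field_simp; ring
  obtain ⟨d1, hd1, hup1⟩ := P.upper (l := l ^ p) (ρ := (1 + ε) * l ^ q) (by positivity) (by
    rw [← Real.rpow_mul hl.le, hpa]; nlinarith)
  obtain ⟨d2, hd2, hup2⟩ := E.slice.upper (l := l ^ (1-p)) (ρ := (1 + ε) * (l ^ (1-p)) ^ (1/(1-β')))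
    (by positivity) (by
      have : 0 < (l ^ (1-p)) ^ (1/(1-β')) := by positivity
      nlinarith)
  obtain ⟨δ1, hδ1, hfar⟩ := hfar d1 hd1
  have hnear : ∀ w s, 0 < w → 0 < s → s < d1 → w < d2 * s →
      H (l * w) ≤ (1 + ε) * l ^ q * (h s + (e s w - s)) := by
    intro w s hw hs hsd hws
    have hlp : 0 < l ^ p := by positivity
    have h1 := hle (l * w) (l ^ p * s) (by positivity) (by positivity)
    have h2 := hup1 s hs.le hsd
    have h3 := hup2 (w / s) (by positivity) (by rw [div_lt_iff₀ hs]; exact hws)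
    have h4 : l * w / (l ^ p * s) = l ^ (1-p) * (w / s) := by
      rw [Real.rpow_sub hl, Real.rpow_one]; field_simp
    rw [E.eq_slice (by positivity) (by positivity), h4] at h1
    rw [E.eq_slice hs hw.le]
    have h5 : l ^ p * (l ^ (1-p)) ^ (1/(1-β')) = l ^ q := by
      rw [← Real.rpow_mul hl.le, ← Real.rpow_add hl, hpb]
    calc H (l * w) ≤ _ := h1
      _ ≤ (1 + ε) * l ^ q * h s + l ^ p * s *
          ((1 + ε) * (l ^ (1-p)) ^ (1/(1-β')) * (e 1 (w / s) - 1)) := by gcongr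
      _ = (1 + ε) * l ^ q * h s + (1 + ε) * (l ^ p * (l ^ (1-p)) ^ (1/(1-β'))) *
          (s * (e 1 (w / s) - 1)) := by ring
      _ = _ := by rw [h5]; ring
  obtain ⟨c, hc, hlow⟩ := E.low hd2
  suffices hmid : ∃ δ > 0, ∀ w, 0 < w → w < δ → ∀ s, 0 ≤ s → d2 * s ≤ w →
      H (l * w) ≤ (1 + ε) * l ^ q * (h s + (e s w - s)) by
    obtain ⟨δ2, hδ2, hmid⟩ := hmid
    refine ⟨min δ1 δ2, by positivity, fun w hw hwδ s hs => ?_⟩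
    rcases le_or_gt d1 s with hds | hds
    · exact hfar w hw (hwδ.trans_le (min_le_left _ _)) s hds
    rcases le_or_gt (d2 * s) w with hws | hws
    · exact hmid w hw (hwδ.trans_le (min_le_right _ _)) s hs hws
    · refine hnear w s hw ?_ hds hws
      by_contra hcon
      have : s = 0 := le_antisymm (not_lt.1 hcon) hs
      subst this
      linarith
  rcases hβ'0.eq_or_lt with rfl | hβ'0
  · have hq1 : q = 1 := by rw [hq]; norm_num
    -- `h (l s) ≤ ε c d2 l s ≤ ε l c w`, which `ε l (e s w - s)` absorbs
    obtain ⟨d, hd, hsmall⟩ := P.littleo ha (η := ε * c * d2) (by positivity)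
    refine ⟨d * d2 / l, by positivity, fun w hw hwδ s hs hws => ?_⟩
    rw [lt_div_iff₀ hl] at hwδ
    have h0 : l * s ≤ d := by
      have : d2 * (l * s) ≤ d2 * d := by nlinarith
      exact le_of_mul_le_mul_left this hd2
    have h1 := hscale w s hw hs
    have h2 := hsmall (l * s) (by positivity) h0
    have h3 := hlow s w hs hw.le hws
    have h4 : ε * c * d2 * (l * s) ≤ ε * l * (e s w - s) := by
      calc ε * c * d2 * (l * s) = ε * l * (c * (d2 * s)) := by ring
        _ ≤ ε * l * (c * w) := by gcongr
        _ ≤ _ := by gcongr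
    have h5 : 0 ≤ (1 + ε) * l * h s := mul_nonneg (by positivity) (P.nonneg hs)
    rw [hq1, Real.rpow_one]
    nlinarith
  · have hb : 1 < 1/(1-β') := by rw [lt_div_iff₀] <;> linarith
    have hHo : ∀ η > 0, ∃ δ > 0, ∀ w, 0 < w → w < δ → H w ≤ η * w := by
      intro η hη
      obtain ⟨y, hy, hky⟩ := E.slice.littleo hb (η := η/2) (by positivity)
      obtain ⟨d, hd, hsmall⟩ := P.littleo ha (η := η/2*y) (by positivity)
      refine ⟨d * y, by positivity, fun w hw hwδ => ?_⟩
      have hwy : w / y ≤ d := by rw [div_le_iff₀ hy]; exact hwδ.le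
      have h1 := hle w (w / y) hw.le (by positivity)
      rw [E.eq_slice (by positivity) hw.le, div_div_cancel₀ hw.ne'] at h1
      have h2 := hsmall (w / y) (by positivity) hwy
      have h3 := hky y hy.le le_rfl
      calc H w ≤ _ := h1
        _ ≤ η/2*y * (w/y) + w/y * (η/2*y) := by gcongr
        _ = η * w := by field_simp; ring
    obtain ⟨δ, hδ, hHo⟩ := hHo (l ^ q * c / l) (by positivity)
    refine ⟨δ / l, by positivity, fun w hw hwδ s hs hws => ?_⟩
    rw [lt_div_iff₀ hl] at hwδ
    have h1 := hHo (l * w) (by positivity) (by linarith)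
    have h3 := hlow s w hs hw.le hws
    have h4 := P.nonneg hs
    have h5 : 0 ≤ c * w := by positivity
    calc H (l * w) ≤ _ := h1
      _ = l ^ q * (c * w) := by field_simp
      _ ≤ l ^ q * (h s + (e s w - s)) := by gcongr; linarith
      _ ≤ (1 + ε) * l ^ q * (h s + (e s w - s)) := by
        rw [mul_assoc]
        refine le_mul_of_one_le_left ?_ (by linarith)
        have : 0 ≤ h s + (e s w - s) := by linarith
        positivity

/-- One step along the path: infimal convolution with an edge multiplies the `β`s. -/
lemma Slice.conv {h H : ℝ → ℝ} {e : ℝ → ℝ → ℝ} {β β' : ℝ} (hβ : β ∈ Set.Ico (0:ℝ) 1)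
    (hβ' : β' ∈ Set.Ico (0:ℝ) 1) (P : Slice h (1/(1-β))) (E : EdgeGauge e (1/(1-β')))
    (hH : ∀ w, 0 ≤ w → IsGLB {r | ∃ s, 0 ≤ s ∧ r = h s + (e s w - s)} (H w)) :
    Slice H (1/(1-β*β')) := by
  have hnn : ∀ w, 0 ≤ w → 0 ≤ H w := by
    intro w hw
    refine (hH w hw).2 ?_
    rintro r ⟨s, hs, rfl⟩
    exact add_nonneg (P.nonneg hs) (E.nonneg hs hw)
  have hlin : ∀ w, 0 ≤ w → H w ≤ w * e 0 1 := by
    intro w hw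
    have : H w ≤ h 0 + (e 0 w - 0) := (hH w hw).1 ⟨0, le_rfl, rfl⟩
    rw [P.zero, E.zero_left hw] at this
    linarith
  have hlow : ∀ δ > 0, ∃ c > 0, ∀ w, δ ≤ w → c ≤ H w := by
    intro δ hδ
    obtain ⟨c1, hc1, h1⟩ := P.low 1 one_pos
    obtain ⟨c2, hc2, h2⟩ := E.low hδ
    refine ⟨min c1 (c2 * δ), by positivity, fun w hw => (hH w (hδ.le.trans hw)).2 ?_⟩
    rintro r ⟨s, hs, rfl⟩
    have hw0 := hδ.le.trans hw
    rcases le_total 1 s with h | h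
    · exact (min_le_left _ _).trans ((h1 s h).trans (le_add_of_nonneg_right (E.nonneg hs hw0)))
    · have h3 := h2 s w hs hw0 (by nlinarith)
      have h4 : c2 * δ ≤ c2 * w := by gcongr
      exact (min_le_right _ _).trans ((h4.trans h3).trans (le_add_of_nonneg_left (P.nonneg hs)))
  refine ⟨le_antisymm (by simpa using hlin 0 le_rfl) (hnn 0 le_rfl), ⟨e 0 1, fun w hw hw1 => ?_⟩,
    hlow, rv0_of_upper (fun w hw => ?_) fun l hl ε hε => conv_upper hβ hβ' P E hH hl hε⟩
  · have h0 : 0 ≤ e 0 1 := le_trans (by simp) (E.max_le 0 1 le_rfl zero_le_one)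
    exact (hlin w hw).trans (mul_le_of_le_one_left h0 hw1)
  · obtain ⟨c, hc, h⟩ := hlow w hw
    exact hc.trans_le (h w le_rfl)

/-! ### Edges and walks of the graph -/

/-- An edge gauge with `α = 0` (that is, `0` is the last point where `e 1` equals `1`). -/
lemma edgeGauge_of {e : ℝ → ℝ → ℝ} {b : ℝ}
    (hα : IsGreatest {y | y ∈ Set.Icc (0:ℝ) 1 ∧ e 1 y = 1} 0)
    (hmax : ∀ u y : ℝ, 0 ≤ u → 0 ≤ y → max u y ≤ e u y)
    (hcont : ContinuousOn (fun p : ℝ × ℝ => e p.1 p.2) (Set.Ici 0 ×ˢ Set.Ici 0))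
    (hhom : ∀ t u y : ℝ, 0 ≤ t → 0 ≤ u → 0 ≤ y → e (t*u) (t*y) = t * e u y)
    (hrv : RV0 (fun y => e 1 (0 + y) - 1) b) : EdgeGauge e b := by
  have hc : ContinuousOn (fun y => e 1 y - 1) (Set.Ici 0) := by
    refine ContinuousOn.sub ?_ continuousOn_const
    exact hcont.comp (f := fun y : ℝ => ((1:ℝ), y)) (by fun_prop)
      (fun y hy => ⟨Set.mem_Ici.2 zero_le_one, hy⟩)
  have hpos : ∀ y, 0 < y → 0 < e 1 y - 1 := by
    intro y hy
    have h1 := hmax 1 y zero_le_one hy.le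
    rcases (max_le_iff.1 h1).1.eq_or_lt with h | h
    · have hy1 : y ≤ 1 := by rw [h]; exact (max_le_iff.1 h1).2
      have := hα.2 ⟨⟨hy.le, hy1⟩, h.symm⟩
      linarith
    · linarith
  refine ⟨hmax, hhom, ⟨?_, ?_, ?_, by simpa using hrv⟩⟩
  · have := hα.1.2
    simp [this]
  · obtain ⟨B, hB⟩ := (isCompact_Icc (a := (0:ℝ)) (b := 1)).bddAbove_image
      (hc.mono Set.Icc_subset_Ici_self)
    exact ⟨B, fun s h0 h1 => hB ⟨s, ⟨h0, h1⟩, rfl⟩⟩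
  · intro δ hδ
    obtain ⟨y, hy, hmin⟩ := (isCompact_Icc (a := δ) (b := max δ 2)).exists_isMinOn
      ⟨δ, le_rfl, le_max_left _ _⟩ (hc.mono fun z hz => hδ.le.trans hz.1)
    refine ⟨min (e 1 y - 1) 1, lt_min (hpos y (hδ.trans_le hy.1)) one_pos, fun s hs => ?_⟩
    rcases le_total s (max δ 2) with h | h
    · exact (min_le_left _ _).trans (hmin ⟨hs, h⟩)
    · have h1 := (le_max_right 1 s).trans (hmax 1 s zero_le_one (hδ.le.trans hs))
      have h2 := (le_max_right δ 2).trans h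
      refine (min_le_right _ _).trans ?_
      linarith

/-- The segment of an adjacency sequence from `v t` to `v (t + n)`, as a walk. -/
lemma exists_walk_of_adj {V : Type*} {G : SimpleGraph V} {v : ℕ → V} {m : ℕ}
    (hadj : ∀ t < m, G.Adj (v t) (v (t+1))) (t n : ℕ) (h : t + n ≤ m) :
    ∃ p : G.Walk (v t) (v (t+n)), p.length = n := by
  induction n with
  | zero => exact ⟨.nil, rfl⟩
  | succ n ih =>
    obtain ⟨p, hp⟩ := ih (by omega)
    exact ⟨p.concat (hadj (t+n) (by omega)), by simp [hp]⟩

/-! ### Induction along the shortest path -/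

/-- **Proposition 3** (β-recurrence on a block graph, exponential margins): under the
edge regular-variation assumption (each edge bivariate marginal gauge is positive,
continuous, 1-homogeneous, dominates the max, and `y ↦ g_{v,v'}(1, α_{v'|v}+y) − 1` is
regularly varying at `0⁺` with index `1/(1−β_{v'|v})`) together with the chain identity
for the trivariate marginal gauges along the shortest path, the function
if every pathwise coefficient `α_{v_k|v_{k−1}}` vanishes (so `α_{j|i} = 0`), then
`x ↦ g_{{i,j}}(1, x) − 1` is regularly varying at `0⁺` with index
`1/(1 − ∏_k β_{v_k|v_{k−1}})`, i.e. `β_{j|i} = ∏_k β_{v_k|v_{k−1}}`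
(second special case after Proposition 3). -/
theorem stmt_6
    {V : Type*} [Fintype V] [DecidableEq V]
    (G : SimpleGraph V)
    (N : ℕ) (hN : 1 ≤ N)
    (C : ℕ → Finset V) (D : ℕ → V)
    (hcover : ∀ w : V, ∃ k, 1 ≤ k ∧ k ≤ N ∧ w ∈ C k)
    (hCne : ∀ k, 1 ≤ k → k ≤ N → (C k).Nonempty)
    (hRIP : ∀ k, 2 ≤ k → k ≤ N → C k ∩ (Finset.Icc 1 (k-1)).biUnion C = {D k})
    (hG : ∀ a b : V, G.Adj a b ↔ (a ≠ b ∧ ∃ k, 1 ≤ k ∧ k ≤ N ∧ a ∈ C k ∧ b ∈ C k))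
    (gC : ℕ → (V → ℝ) → ℝ)
    (hloc : ∀ k, 1 ≤ k → k ≤ N → ∀ x y : V → ℝ, (∀ w ∈ C k, x w = y w) → gC k x = gC k y)
    (hcont : ∀ k, 1 ≤ k → k ≤ N → ContinuousOn (gC k) {x : V → ℝ | ∀ w, 0 ≤ x w})
    (hhom : ∀ k, 1 ≤ k → k ≤ N → ∀ t : ℝ, 0 ≤ t → ∀ x : V → ℝ, (∀ w, 0 ≤ x w) →
      gC k (t • x) = t * gC k x)
    (hmax : ∀ k, 1 ≤ k → k ≤ N → ∀ x : V → ℝ, (∀ w, 0 ≤ x w) → ∀ w ∈ C k, x w ≤ gC k x)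
    (g : (V → ℝ) → ℝ)
    (hg : ∀ x, g x = (∑ k ∈ Finset.Icc 1 N, gC k x) - ∑ k ∈ Finset.Icc 2 N, x (D k))
    -- marginal gauges of pairs and the α-coefficients
    (biv : V → V → ℝ → ℝ → ℝ)
    (hbiv : ∀ a b : V, ∀ u y : ℝ, biv a b u y =
      sInf {r | ∃ z : V → ℝ, (∀ w, 0 ≤ z w) ∧ z a = u ∧ z b = y ∧ r = g z})
    (alpha : V → V → ℝ)
    (halpha : ∀ a b : V, a ≠ b →
      IsGreatest {y | y ∈ Set.Icc (0:ℝ) 1 ∧ biv a b 1 y = 1} (alpha a b))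
    -- edge regular-variation assumption (Assumption 2)
    (betaE : V → V → ℝ)
    (hbetaE : ∀ a b : V, G.Adj a b → betaE a b ∈ Set.Ico (0:ℝ) 1)
    (hedge_max : ∀ a b : V, G.Adj a b → ∀ u y : ℝ, 0 ≤ u → 0 ≤ y → max u y ≤ biv a b u y)
    (hedge_cont : ∀ a b : V, G.Adj a b →
      ContinuousOn (fun p : ℝ × ℝ => biv a b p.1 p.2) (Set.Ici 0 ×ˢ Set.Ici 0))
    (hedge_hom : ∀ a b : V, G.Adj a b → ∀ t u y : ℝ, 0 ≤ t → 0 ≤ u → 0 ≤ y →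
      biv a b (t*u) (t*y) = t * biv a b u y)
    (hedge_RV : ∀ a b : V, G.Adj a b →
      RV0 (fun y => biv a b 1 (alpha a b + y) - 1) (1 / (1 - betaE a b)))
    -- shortest path from i to j
    (i j : V) (hij : i ≠ j)
    (m : ℕ) (hm : 2 ≤ m) (v : ℕ → V)
    (hv0 : v 0 = i) (hvm : v m = j)
    (hadj : ∀ t < m, G.Adj (v t) (v (t+1)))
    (hshort : G.dist i j = m)
    -- chain identity for the trivariate marginal gauges along the path
    (hchain : ∀ t, 1 ≤ t → t + 1 ≤ m → ∀ u s w : ℝ, 0 ≤ u → 0 ≤ s → 0 ≤ w →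
      sInf {r | ∃ z : V → ℝ, (∀ q, 0 ≤ z q) ∧
          z i = u ∧ z (v t) = s ∧ z (v (t+1)) = w ∧ r = g z}
        = biv i (v t) u s + biv (v t) (v (t+1)) s w - s)
    -- every pathwise α-coefficient vanishes
    (hzero : ∀ t < m, alpha (v t) (v (t+1)) = 0) :
    RV0 (fun x => biv i j 1 x - 1)
      (1 / (1 - ∏ t ∈ Finset.range m, betaE (v t) (v (t+1)))) := by
  have hg0 : ∀ z : V → ℝ, (∀ w, 0 ≤ z w) → 0 ≤ g z := by
    intro z hz
    have hsplit : Finset.Icc 1 N = insert 1 (Finset.Icc 2 N) := by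
      ext k; simp only [Finset.mem_Icc, Finset.mem_insert]; omega
    rw [hg, hsplit, Finset.sum_insert (by simp)]
    obtain ⟨w, hw⟩ := hCne 1 le_rfl hN
    have h1 : 0 ≤ gC 1 z := (hz w).trans (hmax 1 le_rfl hN z hz w hw)
    have h2 : ∑ k ∈ Finset.Icc 2 N, z (D k) ≤ ∑ k ∈ Finset.Icc 2 N, gC k z := by
      refine Finset.sum_le_sum fun k hk => ?_
      rw [Finset.mem_Icc] at hk
      refine hmax k (by omega) hk.2 z hz _ ?_
      have : D k ∈ C k ∩ (Finset.Icc 1 (k-1)).biUnion C := by rw [hRIP k hk.1 hk.2]; simp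
      exact (Finset.mem_inter.1 this).1
    linarith
  have hne : ∀ t, 1 ≤ t → t ≤ m → i ≠ v t := by
    intro t h1 h2 h
    obtain ⟨p, hp⟩ := exists_walk_of_adj hadj t (m - t) (by omega)
    have h3 := SimpleGraph.dist_le p
    rw [hp, ← h, show t + (m - t) = m by omega, hvm, hshort] at h3
    omega
  have hedge : ∀ t < m, EdgeGauge (biv (v t) (v (t+1))) (1 / (1 - betaE (v t) (v (t+1)))) := by
    intro t ht
    have ha := hadj t ht
    refine edgeGauge_of ?_ (hedge_max _ _ ha) (hedge_cont _ _ ha) (hedge_hom _ _ ha) ?_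
    · have := halpha (v t) (v (t+1)) ha.ne
      rwa [hzero t ht] at this
    · have := hedge_RV _ _ ha
      rwa [hzero t ht] at this
  have hglb : ∀ t, 1 ≤ t → t + 1 ≤ m → ∀ w, 0 ≤ w →
      IsGLB {r | ∃ s, 0 ≤ s ∧ r = (biv i (v t) 1 s - 1) + (biv (v t) (v (t+1)) s w - s)}
        (biv i (v (t+1)) 1 w - 1) := by
    intro t h1 h2 w hw
    have n1 := hne t h1 (by omega)
    have n2 := hne (t+1) (by omega) h2
    have n3 := (hadj t (by omega)).ne
    set A := {r | ∃ z : V → ℝ, (∀ w, 0 ≤ z w) ∧ z i = 1 ∧ z (v (t+1)) = w ∧ r = g z} with hA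
    let B : ℝ → Set ℝ := fun s => {r | ∃ z : V → ℝ, (∀ q, 0 ≤ z q) ∧
          z i = 1 ∧ z (v t) = s ∧ z (v (t+1)) = w ∧ r = g z}
    have hB : ∀ s, 0 ≤ s → sInf (B s) = biv i (v t) 1 s + biv (v t) (v (t+1)) s w - s :=
      fun s hs => hchain t h1 h2 1 s w zero_le_one hs hw
    have hBA : ∀ s, B s ⊆ A := by
      rintro s r ⟨z, hz, e1, -, e3, e4⟩
      exact ⟨z, hz, e1, e3, e4⟩
    have hBne : ∀ s, 0 ≤ s → (B s).Nonempty := by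
      intro s hs
      -- the three path vertices are distinct, so their coordinates can be prescribed freely
      refine ⟨_, fun x => if x = i then 1 else if x = v t then s else w, fun x => ?_, ?_, ?_, ?_,
        rfl⟩
      · dsimp only; split_ifs <;> first | exact zero_le_one | assumption
      · simp
      · simp [n1.symm]
      · simp [n2.symm, n3.symm]
    have hAbdd : BddBelow A := ⟨0, by rintro r ⟨z, hz, -, -, rfl⟩; exact hg0 z hz⟩
    have hBbdd : ∀ s, BddBelow (B s) := fun s => hAbdd.mono (hBA s)
    rw [hbiv i (v (t+1))]
    constructor
    · rintro r ⟨s, hs, rfl⟩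
      have := csInf_le_csInf hAbdd (hBne s hs) (hBA s)
      rw [hB s hs] at this
      linarith
    · intro L hL
      have : L + 1 ≤ sInf A := by
        refine le_csInf ((hBne 0 le_rfl).mono (hBA 0)) ?_
        rintro r ⟨z, hz, e1, e2, rfl⟩
        have h3 := csInf_le (hBbdd (z (v t))) ⟨z, hz, e1, rfl, e2, rfl⟩
        rw [hB _ (hz _)] at h3
        have h4 := hL ⟨z (v t), hz _, rfl⟩
        linarith
      linarith
  have hprod : ∀ t, 1 ≤ t → t ≤ m →
      ∏ k ∈ Finset.range t, betaE (v k) (v (k+1)) ∈ Set.Ico (0:ℝ) 1 := by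
    intro t h1 h2
    induction t, h1 using Nat.le_induction with
    | base => simpa using hbetaE _ _ (hadj 0 (by omega))
    | succ t h1 ih =>
      obtain ⟨a1, a2⟩ := ih (by omega)
      obtain ⟨b1, b2⟩ := hbetaE _ _ (hadj t (by omega))
      rw [Finset.prod_range_succ]
      exact ⟨by positivity, by nlinarith⟩
  have main : ∀ t, 1 ≤ t → t ≤ m → Slice (fun x => biv i (v t) 1 x - 1)
      (1 / (1 - ∏ k ∈ Finset.range t, betaE (v k) (v (k+1)))) := by
    intro t h1 h2
    induction t, h1 using Nat.le_induction with
    | base =>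
      have := (hedge 0 (by omega)).slice
      rw [hv0] at this
      simpa [hv0] using this
    | succ t h1 ih =>
      rw [Finset.prod_range_succ]
      exact Slice.conv (hprod t h1 (by omega)) (hbetaE _ _ (hadj t (by omega))) (ih (by omega))
        (hedge t (by omega)) (hglb t h1 h2)
  have := (main m (by omega) le_rfl).rv
  rwa [hvm] at this
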